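/- Unrooted critical ensemble limit law: at μ₁ = log 6 define the unrooted weights w̃(N,m) = (1/m)·exp(−μ₁ m/2)·C₀(N,m) for even m with 2 ≤ m ≤ N and the corresponding distribution P̃_N(m) = w̃(N,m)/Σ_{m' even, 2 ≤ m' ≤ N} w̃(N,m'). Then for all reals 0 ≤ a < b, P̃_N({m : a·√N ≤ m ≤ b·√N}) converges as N → ∞ along even integers to (∫_a^b x^{−1/2}·exp(−2x²/3) dx) / (∫_0^∞ x^{−1/2}·exp(−2x²/3) dx). -/

import Mathlib

open Filter Real MeasureTheory

/-- Number of rooted quasitriangulations of a sphere with a hole with `N` triangles and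
`m` boundary edges (Goulden–Jackson), with `j = (N - m)/2`. -/
noncomputable def C0 (N m : ℕ) : ℝ :=
  (2 : ℝ) ^ ((N - m) / 2 + 2) * (Nat.factorial (2 * m + 3 * ((N - m) / 2) - 1) : ℝ) *
    (Nat.factorial (2 * m - 3) : ℝ) /
    ((Nat.factorial ((N - m) / 2 + 1) : ℝ) * (Nat.factorial (2 * m + 2 * ((N - m) / 2)) : ℝ) *
      ((Nat.factorial (m - 2) : ℝ)) ^ 2)

/-- The filter "N → ∞ along even integers". -/
def evenAtTop : Filter ℕ := Filter.atTop ⊓ Filter.principal {N | Even N}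
open scoped Classical

/-- Unrooted weights at the critical point μ₁ = log 6: w̃(N,m) = (1/m) exp(-μ₁ m/2) C₀(N,m). -/
noncomputable def wTilde (N m : ℕ) : ℝ :=
  (1 / (m : ℝ)) * Real.exp (-Real.log 6 * m / 2) * C0 N m

/-- Unrooted critical boundary-length distribution. -/
noncomputable def PTilde (N m : ℕ) : ℝ :=
  wTilde N m / ∑ m' ∈ (Finset.range (N + 1)).filter (fun m' : ℕ => Even m' ∧ 2 ≤ m'),
    wTilde N m'

open scoped Topology

/-!
For `N = 2 * n` and `m = 2 * k` the weight is, up to a factor independent of `k`, the product of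
`boundaryFactor k` and `bulkFactor n k`. By the Wallis product the first is asymptotic to a multiple
of `1 / √k`. The second is a product over `i < k` of quotients of factors `1 + (α * i + β) / n`, so
at `k ≈ x * √(n / 2)` it tends to `exp (-2 * x ^ 2 / 3)`, while `1 + u ≤ exp u` gives a Gaussian
bound uniform in `n`. Viewing the rescaled sums over `k` as integrals of step functions, dominated
convergence yields the limit of `∑ φ (m / √N) * PTilde N m` for every bounded, almost everywhere
continuous `φ`, in particular for the indicator of `[a, b]`.
-/

section RiemannSums

variable {E : Type*} [NormedAddCommGroup E] [NormedSpace ℝ E] [CompleteSpace E]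

theorem intervalIntegral_comp_natCeil (F : ℕ → E) (n : ℕ) :
    ∫ x in (0 : ℝ)..n, F ⌈x⌉₊ = ∑ k ∈ Finset.range n, F (k + 1) := by
  have ceil_eq (k : ℕ) : Set.EqOn (fun _ => F (k + 1)) (fun x : ℝ => F ⌈x⌉₊)
      (Set.uIoc (k : ℝ) (k + 1 : ℕ)) := by
    intro x hx
    rw [Set.uIoc_of_le (by simp)] at hx
    have : ⌈x⌉₊ = k + 1 := (Nat.ceil_eq_iff k.succ_ne_zero).2 (by simpa using hx)
    simp only [this]
  have integrable (k : ℕ) :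
      IntervalIntegrable (fun x : ℝ => F ⌈x⌉₊) volume (k : ℝ) (k + 1 : ℕ) :=
    intervalIntegrable_const.congr (ceil_eq k)
  rw [← Nat.cast_zero, ← intervalIntegral.sum_integral_adjacent_intervals fun k _ => integrable k]
  refine Finset.sum_congr rfl fun k _ => ?_
  rw [← intervalIntegral.integral_congr_ae (.of_forall (ceil_eq k))]
  simp

theorem setIntegral_indicator_comp_natCeil_mul (F : ℕ → E) (n : ℕ) {t : ℝ} (ht : 0 < t) :
    ∫ x in Set.Ioi 0, (Set.Ioc 0 (n / t)).indicator (fun x => F ⌈x * t⌉₊) x =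
      t⁻¹ • ∑ k ∈ Finset.range n, F (k + 1) := by
  rw [setIntegral_indicator measurableSet_Ioc, Set.inter_eq_right.2 Set.Ioc_subset_Ioi_self,
    ← intervalIntegral.integral_of_le (by positivity),
    intervalIntegral.integral_comp_mul_right (fun x => F ⌈x⌉₊) ht.ne', zero_mul,
    div_mul_cancel₀ _ ht.ne', intervalIntegral_comp_natCeil]

/- The sum is the integral of the step function `x ↦ f i ⌈x * t i⌉₊`; an antitone bound on the
lattice points `k / t i` bounds the step function, since `x ≤ ⌈x * t i⌉₊ / t i`. -/
theorem tendsto_inv_smul_sum_of_dominated_antitone {ι : Type*} {l : Filter ι}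
    [l.IsCountablyGenerated] {t : ι → ℝ} {N : ι → ℕ} {f : ι → ℕ → E} {g : ℝ → E} {bound : ℝ → ℝ}
    (ht : Tendsto t l atTop) (hN : Tendsto (fun i => N i / t i) l atTop)
    (bound_integrable : IntegrableOn bound (Set.Ioi 0))
    (bound_antitone : AntitoneOn bound (Set.Ioi 0))
    (le_bound : ∀ᶠ i in l, ∀ k : ℕ, 0 < k → k ≤ N i → ‖f i k‖ ≤ bound (k / t i))
    (lim : ∀ᵐ x ∂volume.restrict (Set.Ioi 0), ∀ K : ι → ℕ,
      Tendsto (fun i => K i / t i) l (𝓝 x) → Tendsto (fun i => f i (K i)) l (𝓝 (g x))) :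
    Tendsto (fun i => (t i)⁻¹ • ∑ k ∈ Finset.range (N i), f i (k + 1)) l
      (𝓝 (∫ x in Set.Ioi 0, g x)) := by
  have integral_eq : ∀ᶠ i in l,
      ∫ x in Set.Ioi 0, (Set.Ioc 0 (N i / t i)).indicator (fun x => f i ⌈x * t i⌉₊) x =
        (t i)⁻¹ • ∑ k ∈ Finset.range (N i), f i (k + 1) := by
    filter_upwards [ht.eventually_gt_atTop 0] with i hi
    exact setIntegral_indicator_comp_natCeil_mul (f i) (N i) hi
  refine (tendsto_integral_filter_of_dominated_convergence (fun x => ‖bound x‖)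
    (.of_forall fun i => ?_) ?_ bound_integrable.norm ?_).congr' integral_eq
  · exact ((StronglyMeasurable.of_discrete (f := f i)).comp_measurable
      (Nat.measurable_ceil.comp (measurable_id.mul_const _))).aestronglyMeasurable.indicator
      measurableSet_Ioc
  · filter_upwards [ht.eventually_gt_atTop 0, le_bound] with i hi hf
    refine .of_forall fun x => ?_
    rw [norm_indicator_eq_indicator_norm]
    refine Set.indicator_apply_le' (fun hx => ?_) fun _ => norm_nonneg _
    have hxt : 0 < x * t i := mul_pos hx.1 hi
    have hceil : ⌈x * t i⌉₊ ≤ N i := Nat.ceil_le.2 ((le_div_iff₀ hi).1 hx.2)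
    have hle : x ≤ ⌈x * t i⌉₊ / t i := (le_div_iff₀ hi).2 (Nat.le_ceil _)
    exact (hf _ (Nat.ceil_pos.2 hxt) hceil).trans <|
      (bound_antitone hx.1 (Set.mem_Ioi.2 (hx.1.trans_le hle)) hle).trans (Real.le_norm_self _)
  · filter_upwards [ae_restrict_mem measurableSet_Ioi, lim] with x hx hlim
    refine (hlim _ ((tendsto_nat_ceil_mul_div_atTop hx.le).comp ht)).congr' ?_
    filter_upwards [hN.eventually_ge_atTop x] with i hi
    have hmem : x ∈ Set.Ioc 0 (N i / t i) := ⟨hx, hi⟩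
    exact (Set.indicator_of_mem hmem fun x => f i ⌈x * t i⌉₊).symm

end RiemannSums

section Products

theorem abs_log_one_add_sub_le {u : ℝ} (hu : |u| ≤ 1 / 2) : |log (1 + u) - u| ≤ 2 * u ^ 2 := by
  have taylor : |-u + log (1 + u)| ≤ u ^ 2 / (1 - |u|) := by
    simpa using abs_log_sub_add_sum_range_le (x := -u) (by rw [abs_neg]; linarith) 1
  calc |log (1 + u) - u| ≤ u ^ 2 / (1 - |u|) := by rwa [sub_eq_neg_add]
    _ ≤ 2 * u ^ 2 := by rw [div_le_iff₀ (by linarith)]; nlinarith [sq_nonneg u]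

theorem tendsto_prod_one_add_of_tendsto_sum {ι κ : Type*} {l : Filter ι} {S : ι → Finset κ}
    {u : ι → κ → ℝ} {s : ℝ} (hsum : Tendsto (fun n => ∑ i ∈ S n, u n i) l (𝓝 s))
    (hsq : Tendsto (fun n => ∑ i ∈ S n, u n i ^ 2) l (𝓝 0)) :
    Tendsto (fun n => ∏ i ∈ S n, (1 + u n i)) l (𝓝 (exp s)) := by
  have small : ∀ᶠ n in l, ∀ i ∈ S n, |u n i| ≤ 1 / 2 := by
    filter_upwards [hsq.eventually_le_const (show (0 : ℝ) < (1 / 2) ^ 2 by norm_num)] with n hn i hi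
    have hui : u n i ^ 2 ≤ (1 / 2) ^ 2 :=
      (Finset.single_le_sum (fun j _ => sq_nonneg (u n j)) hi).trans hn
    exact abs_le_of_sq_le_sq hui (by norm_num)
  have pos : ∀ᶠ n in l, ∀ i ∈ S n, 0 < 1 + u n i := by
    filter_upwards [small] with n hn i hi
    linarith [(abs_le.1 (hn i hi)).1]
  have log_sub : Tendsto (fun n => ∑ i ∈ S n, (log (1 + u n i) - u n i)) l (𝓝 0) := by
    refine squeeze_zero_norm' ?_ (by simpa using hsq.const_mul 2)
    filter_upwards [small] with n hn
    rw [Finset.mul_sum]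
    exact norm_sum_le_of_le _ fun i hi => abs_log_one_add_sub_le (hn i hi)
  have log_sum : Tendsto (fun n => ∑ i ∈ S n, log (1 + u n i)) l (𝓝 s) := by
    simpa [Finset.sum_sub_distrib] using log_sub.add hsum
  refine ((continuous_exp.tendsto s).comp log_sum).congr' ?_
  filter_upwards [pos] with n hn
  rw [Function.comp_apply, exp_sum]
  exact Finset.prod_congr rfl fun i hi => exp_log (hn i hi)

theorem sum_range_affine (α β : ℝ) (k : ℕ) :
    ∑ i ∈ Finset.range k, (α * i + β) = α * (k * (k - 1) / 2) + β * k := by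
  induction k with
  | zero => simp
  | succ k ih => rw [Finset.sum_range_succ, ih]; push_cast; ring

variable {ι : Type*} {l : Filter ι} {s : ι → ℝ} {K : ι → ℕ} {y : ℝ}

theorem tendsto_sum_range_affine_div_sq (α β : ℝ) (hs : Tendsto s l atTop)
    (hK : Tendsto (fun n => K n / s n) l (𝓝 y)) :
    Tendsto (fun n => ∑ i ∈ Finset.range (K n), (α * i + β) / s n ^ 2) l
      (𝓝 (α * y ^ 2 / 2)) := by
  have lim : Tendsto (fun n => α * (K n / s n) ^ 2 / 2 + (β - α / 2) * (K n / s n) * (s n)⁻¹) l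
      (𝓝 (α * y ^ 2 / 2 + (β - α / 2) * y * 0)) :=
    (((hK.pow 2).const_mul α).div_const 2).add
      ((hK.const_mul _).mul (tendsto_inv_atTop_zero.comp hs))
  rw [mul_zero, add_zero] at lim
  refine lim.congr' ?_
  filter_upwards [hs.eventually_gt_atTop 0] with n hn
  rw [← Finset.sum_div, sum_range_affine]
  field

theorem tendsto_sum_range_sq_affine_div_sq (α β : ℝ) (hs : Tendsto s l atTop)
    (hK : Tendsto (fun n => K n / s n) l (𝓝 y)) :
    Tendsto (fun n => ∑ i ∈ Finset.range (K n), ((α * i + β) / s n ^ 2) ^ 2) l (𝓝 0) := by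
  have inv_lim : Tendsto (fun n => (s n)⁻¹) l (𝓝 0) := tendsto_inv_atTop_zero.comp hs
  have lim : Tendsto
      (fun n => (s n)⁻¹ * (K n / s n * (|α| * (K n / s n) + |β| * (s n)⁻¹) ^ 2)) l (𝓝 0) := by
    simpa using inv_lim.mul (hK.mul (((hK.const_mul |α|).add (inv_lim.const_mul |β|)).pow 2))
  refine squeeze_zero' (.of_forall fun n => by positivity) ?_ lim
  filter_upwards [hs.eventually_gt_atTop 0] with n hn
  have term_le : ∀ i ∈ Finset.range (K n),
      ((α * i + β) / s n ^ 2) ^ 2 ≤ ((|α| * K n + |β|) / s n ^ 2) ^ 2 := by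
    intro i hi
    have hiK : (i : ℝ) ≤ K n := by exact_mod_cast (Finset.mem_range.1 hi).le
    have abs_le : |α * i + β| ≤ |α| * K n + |β| :=
      calc |α * i + β| ≤ |α * i| + |β| := abs_add_le _ _
        _ ≤ |α| * K n + |β| := by rw [abs_mul, Nat.abs_cast]; gcongr
    rw [div_pow, div_pow, ← sq_abs (α * i + β)]
    gcongr
  calc ∑ i ∈ Finset.range (K n), ((α * i + β) / s n ^ 2) ^ 2
      ≤ K n * ((|α| * K n + |β|) / s n ^ 2) ^ 2 := by
        simpa using Finset.sum_le_card_nsmul _ _ _ term_le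
    _ = _ := by field

theorem tendsto_prod_one_add_affine_div_sq (α β : ℝ) (hs : Tendsto s l atTop)
    (hK : Tendsto (fun n => K n / s n) l (𝓝 y)) :
    Tendsto (fun n => ∏ i ∈ Finset.range (K n), (1 + (α * i + β) / s n ^ 2)) l
      (𝓝 (exp (α * y ^ 2 / 2))) :=
  tendsto_prod_one_add_of_tendsto_sum (tendsto_sum_range_affine_div_sq α β hs hK)
    (tendsto_sum_range_sq_affine_div_sq α β hs hK)

end Products

section CentralBinomial

theorem centralBinom_div_four_pow_sq (n : ℕ) :
    ((n.centralBinom : ℝ) / 4 ^ n) ^ 2 = ((1 + 2 * n) * Wallis.W n)⁻¹ := by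
  have centralBinom_eq : (n.centralBinom : ℝ) = (2 * n).factorial / n.factorial ^ 2 := by
    rw [Nat.centralBinom_eq_two_mul_choose, Nat.cast_choose ℝ (by lia), sq,
      show 2 * n - n = n by lia]
  have pow_eq : (2 : ℝ) ^ (4 * n) = (4 ^ n) ^ 2 := by
    rw [← pow_mul, mul_comm n, pow_mul, pow_mul]; norm_num
  rw [Wallis.W_eq_factorial_ratio, centralBinom_eq, pow_eq]
  field

theorem tendsto_sqrt_add_mul_centralBinom_div_four_pow (c : ℝ) :
    Tendsto (fun n : ℕ => √(c + n) * (n.centralBinom / 4 ^ n)) atTop (𝓝 (√π)⁻¹) := by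
  have lim : Tendsto (fun n : ℕ => √((c + 1 * n) / (1 + 2 * n) * (Wallis.W n)⁻¹)) atTop
      (𝓝 (√(1 / 2 * (π / 2)⁻¹))) :=
    ((tendsto_add_mul_div_add_mul_atTop_nhds c 1 1 two_ne_zero).mul
      (Wallis.tendsto_W_nhds_pi_div_two.inv₀ (by positivity))).sqrt
  rw [show 1 / 2 * (π / 2)⁻¹ = π⁻¹ by field, sqrt_inv] at lim
  refine lim.congr fun n => ?_
  have sqrt_sq_eq := sqrt_sq (show 0 ≤ (n.centralBinom : ℝ) / 4 ^ n by positivity)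
  rw [← sqrt_sq_eq, ← sqrt_mul' _ (sq_nonneg _), centralBinom_div_four_pow_sq, one_mul, mul_inv,
    div_eq_mul_inv, mul_assoc]

end CentralBinomial

section BoundaryFactor

/-- The part of the weight `wTilde (2 * n) (2 * k)` that depends only on the boundary length
`2 * k`. At `k = 0` it takes the junk value `0`. -/
noncomputable def boundaryFactor (k : ℕ) : ℝ :=
  (4 * k - 3).factorial / ((2 * k - 2).factorial ^ 2 * (2 * k) * 16 ^ k)

theorem boundaryFactor_nonneg (k : ℕ) : 0 ≤ boundaryFactor k := by
  unfold boundaryFactor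
  positivity

theorem boundaryFactor_succ (k : ℕ) :
    boundaryFactor (k + 1) =
      (1 + 4 * k) / (32 + 32 * k) * ((2 * k).centralBinom / 4 ^ (2 * k)) := by
  have factorial_eq : (4 * (k + 1) - 3).factorial = (4 * k + 1) * (2 * (2 * k)).factorial := by
    rw [show 4 * (k + 1) - 3 = 2 * (2 * k) + 1 by lia, Nat.factorial_succ]
    ring
  rw [boundaryFactor, factorial_eq, show 2 * (k + 1) - 2 = 2 * k by lia,
    Nat.centralBinom_eq_two_mul_choose, Nat.cast_choose ℝ (by lia),
    show 2 * (2 * k) - 2 * k = 2 * k by lia, pow_mul 4 2 k,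
    show (4 : ℝ) ^ 2 = 16 by norm_num]
  push_cast
  field

theorem tendsto_sqrt_mul_boundaryFactor :
    Tendsto (fun k : ℕ => √k * boundaryFactor k) atTop (𝓝 (8 * √2 * √π)⁻¹) := by
  rw [← tendsto_add_atTop_iff_nat 1]
  have lim : Tendsto (fun k : ℕ => (1 + 4 * (k : ℝ)) / (32 + 32 * k) *
      (√(2 + (2 * k : ℕ)) * ((2 * k).centralBinom / 4 ^ (2 * k))) / √2) atTop
      (𝓝 (4 / 32 * (√π)⁻¹ / √2)) :=
    ((tendsto_add_mul_div_add_mul_atTop_nhds 1 32 4 (by norm_num)).mul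
      ((tendsto_sqrt_add_mul_centralBinom_div_four_pow 2).comp
        (tendsto_id.const_mul_atTop' two_pos))).div_const _
  rw [show 4 / 32 * (√π)⁻¹ / √2 = (8 * √2 * √π)⁻¹ by field] at lim
  refine lim.congr fun k => ?_
  have sqrt_eq : √(2 + (2 * k : ℕ)) = √2 * √(k + 1 : ℕ) := by
    rw [← sqrt_mul zero_le_two]; push_cast; ring_nf
  rw [boundaryFactor_succ, sqrt_eq]
  field

theorem exists_sqrt_mul_boundaryFactor_le : ∃ M, 0 ≤ M ∧ ∀ k : ℕ, √k * boundaryFactor k ≤ M := by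
  obtain ⟨M, hM⟩ := tendsto_sqrt_mul_boundaryFactor.bddAbove_range
  have le_M (k : ℕ) : √k * boundaryFactor k ≤ M := hM ⟨k, rfl⟩
  exact ⟨M, by simpa using le_M 0, le_M⟩

end BoundaryFactor

section BulkFactor

/-- The part of the weight `wTilde (2 * n) (2 * k)` in which `n` and `k` interact, up to powers. -/
noncomputable def bulkCount (n k : ℕ) : ℝ :=
  (3 * n + k - 1).factorial / ((n - k + 1).factorial * (2 * n + 2 * k).factorial)

/-- The ratio of consecutive values in `k` of `(4 / 3) ^ k * bulkCount n k`. -/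
noncomputable def bulkRatio (n k : ℕ) : ℝ :=
  (3 * n + k) * (n - k + 1) * 4 / (3 * (2 * n + 2 * k + 1) * (2 * n + 2 * k + 2))

/-- The bulk part of the weight `wTilde (2 * n) (2 * k)`, normalized to be `1` at `k = 0`. -/
noncomputable def bulkFactor (n k : ℕ) : ℝ := ∏ i ∈ Finset.range k, bulkRatio n i

theorem bulkCount_pos (n k : ℕ) : 0 < bulkCount n k := by
  unfold bulkCount
  positivity

theorem bulkCount_succ {n k : ℕ} (hk : k < n) :
    4 / 3 * bulkCount n (k + 1) = bulkCount n k * bulkRatio n k := by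
  obtain ⟨d, rfl⟩ := Nat.exists_eq_add_of_lt hk
  have cast_sub : ((k + d + 1 : ℕ) : ℝ) - k + 1 = d + 2 := by push_cast; ring
  rw [bulkCount, bulkCount, bulkRatio, cast_sub,
    show 3 * (k + d + 1) + (k + 1) - 1 = 3 * (k + d + 1) + k - 1 + 1 by lia,
    show k + d + 1 - (k + 1) + 1 = d + 1 by lia, show k + d + 1 - k + 1 = d + 1 + 1 by lia,
    show 2 * (k + d + 1) + 2 * (k + 1) = 2 * (k + d + 1) + 2 * k + 1 + 1 by lia,
    Nat.factorial_succ (3 * _ + _ - 1),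
    show 3 * (k + d + 1) + k - 1 + 1 = 3 * (k + d + 1) + k by lia,
    Nat.factorial_succ (d + 1), Nat.factorial_succ (_ + 1), Nat.factorial_succ (_ + 2 * k)]
  push_cast
  field

theorem bulkFactor_eq {n k : ℕ} (hk : k ≤ n) :
    bulkFactor n k = (4 / 3) ^ k * bulkCount n k / bulkCount n 0 := by
  have h0 := (bulkCount_pos n 0).ne'
  refine Finset.prod_range_induction _ (fun k => (4 / 3) ^ k * bulkCount n k / bulkCount n 0)
    (by simp [h0]) k fun i hi => ?_
  rw [pow_succ, mul_assoc, bulkCount_succ (hi.trans_le hk)]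
  ring

theorem bulkRatio_nonneg {n k : ℕ} (hk : k ≤ n) : 0 ≤ bulkRatio n k := by
  have : (0 : ℝ) ≤ n - k := sub_nonneg.2 (by exact_mod_cast hk)
  unfold bulkRatio
  positivity

theorem bulkFactor_nonneg {n k : ℕ} (hk : k ≤ n) : 0 ≤ bulkFactor n k :=
  Finset.prod_nonneg fun _ hi => bulkRatio_nonneg ((Finset.mem_range.1 hi).le.trans hk)

theorem bulkRatio_le_exp {n k : ℕ} (hn : 0 < n) (hk : k ≤ n) :
    bulkRatio n k ≤ exp ((-(2 / 3) * k + 1) / n) := by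
  have hn' : (0 : ℝ) < n := by exact_mod_cast hn
  have hk' : (0 : ℝ) ≤ n - k := sub_nonneg.2 (by exact_mod_cast hk)
  have factor_nonneg : 0 ≤ (1 - k : ℝ) / n + 1 := by
    rw [div_add_one hn'.ne']
    exact div_nonneg (by linarith) hn'.le
  calc bulkRatio n k ≤ (3 * n + k) * (n - k + 1) * 4 / (3 * (2 * n) * (2 * n)) := by
        unfold bulkRatio
        gcongr <;> linarith [(k.cast_nonneg : (0 : ℝ) ≤ k)]
    _ = (k / (3 * n) + 1) * ((1 - k) / n + 1) := by field
    _ ≤ exp (k / (3 * n)) * exp ((1 - k) / n) := by gcongr <;> exact add_one_le_exp _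
    _ = exp ((-(2 / 3) * k + 1) / n) := by rw [← exp_add]; congr 1; field

theorem bulkFactor_le_exp {n k : ℕ} (hn : 0 < n) (hk : k ≤ n) :
    bulkFactor n k ≤ exp (4 / 3) * exp (-(k ^ 2 / (3 * n))) := by
  have hn' : (0 : ℝ) < n := by exact_mod_cast hn
  have hk' : (k / n : ℝ) ≤ 1 := (div_le_one hn').2 (by exact_mod_cast hk)
  calc bulkFactor n k
      ≤ ∏ i ∈ Finset.range k, exp ((-(2 / 3) * i + 1) / n) := by
        refine Finset.prod_le_prod (fun i hi => ?_) fun i hi => ?_ <;>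
          have hin := (Finset.mem_range.1 hi).le.trans hk
        · exact bulkRatio_nonneg hin
        · exact bulkRatio_le_exp hn hin
    _ = exp (4 / 3 * (k / n) + -(k ^ 2 / (3 * n))) := by
        rw [← exp_sum, ← Finset.sum_div, sum_range_affine]
        congr 1
        field
    _ ≤ exp (4 / 3 + -(k ^ 2 / (3 * n))) := by gcongr; linarith
    _ = _ := exp_add _ _

end BulkFactor

section LocalLimit

/-- The scale of the half boundary length `k` when there are `2 * n` triangles:
`2 * k = x * √(2 * n)` corresponds to `k = x * boundaryScale n`. -/
noncomputable def boundaryScale (n : ℕ) : ℝ := √(n / 2)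

/-- The density of the limit law, up to its normalizing constant. -/
noncomputable def limitDensity (x : ℝ) : ℝ := x ^ (-(1 : ℝ) / 2) * exp (-2 * x ^ 2 / 3)

/-- The weight `wTilde (2 * n) (2 * k)` without its `k`-independent factor. -/
noncomputable def reducedWeight (n k : ℕ) : ℝ := boundaryFactor k * bulkFactor n k

theorem wTilde_two_mul {n k : ℕ} (hk : 0 < k) (hkn : k ≤ n) :
    wTilde (2 * n) (2 * k) = 2 ^ (n + 2) * bulkCount n 0 * reducedWeight n k := by
  have exp_eq : exp (-log 6 * (2 * k : ℕ) / 2) = (6 ^ k)⁻¹ := by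
    rw [← exp_log (show (0 : ℝ) < 6 by norm_num), ← exp_nat_mul, ← exp_neg, log_exp]
    push_cast
    ring_nf
  have two_pow_eq : (2 : ℝ) ^ (n + 2) = 2 ^ (n - k + 2) * 2 ^ k := by
    rw [← pow_add, show n - k + 2 + k = n + 2 by lia]
  have sixteen_pow_eq : (16 : ℝ) ^ k = (4 / 3) ^ k * (2 ^ k * 6 ^ k) := by
    rw [← mul_pow, ← mul_pow]
    norm_num
  have reduced_eq : bulkCount n 0 * reducedWeight n k =
      boundaryFactor k * ((4 / 3) ^ k * bulkCount n k) := by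
    have h0 := (bulkCount_pos n 0).ne'
    rw [reducedWeight, bulkFactor_eq hkn]
    field
  rw [wTilde, C0, exp_eq, mul_assoc (2 ^ (n + 2)), reduced_eq, boundaryFactor, bulkCount,
    two_pow_eq, sixteen_pow_eq,
    show (2 * n - 2 * k) / 2 = n - k by lia,
    show 2 * (2 * k) + 3 * (n - k) - 1 = 3 * n + k - 1 by lia,
    show 2 * (2 * k) - 3 = 4 * k - 3 by lia,
    show 2 * (2 * k) + 2 * (n - k) = 2 * n + 2 * k by lia]
  push_cast
  field

theorem boundaryScale_sq (n : ℕ) : boundaryScale n ^ 2 = n / 2 := sq_sqrt (by positivity)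

theorem boundaryScale_pos {n : ℕ} (hn : 0 < n) : 0 < boundaryScale n :=
  sqrt_pos.2 (by positivity)

theorem sqrt_two_mul_eq_boundaryScale (n : ℕ) : √(2 * n : ℕ) = 2 * boundaryScale n := by
  rw [sqrt_eq_iff_eq_sq (by positivity) (by unfold boundaryScale; positivity), mul_pow,
    boundaryScale_sq]
  push_cast
  ring

theorem tendsto_boundaryScale : Tendsto boundaryScale atTop atTop :=
  tendsto_sqrt_atTop.comp (tendsto_natCast_atTop_atTop.atTop_div_const two_pos)

theorem tendsto_natCast_div_boundaryScale :
    Tendsto (fun n : ℕ => n / boundaryScale n) atTop atTop := by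
  refine (tendsto_boundaryScale.const_mul_atTop two_pos).congr' ?_
  filter_upwards [eventually_gt_atTop 0] with n hn
  rw [eq_div_iff (boundaryScale_pos hn).ne', mul_assoc, ← sq, boundaryScale_sq]
  ring

theorem rpow_neg_one_div_two {x : ℝ} (hx : 0 ≤ x) : x ^ (-(1 : ℝ) / 2) = (√x)⁻¹ := by
  rw [neg_div, rpow_neg hx, sqrt_eq_rpow]

theorem bulkRatio_eq_affine {n : ℕ} (hn : 0 < n) (i : ℕ) :
    bulkRatio n i =
      (1 + (1 / 6 * i + 0) / boundaryScale n ^ 2) *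
        (1 + (-(1 / 2) * i + 1 / 2) / boundaryScale n ^ 2) /
      ((1 + (1 / 2 * i + 1 / 4) / boundaryScale n ^ 2) *
        (1 + (1 / 2 * i + 1 / 2) / boundaryScale n ^ 2)) := by
  rw [bulkRatio, boundaryScale_sq]
  field

variable {K : ℕ → ℕ} {x : ℝ}

theorem tendsto_bulkFactor (hK : Tendsto (fun n => K n / boundaryScale n) atTop (𝓝 x)) :
    Tendsto (fun n => bulkFactor n (K n)) atTop (𝓝 (exp (-2 * x ^ 2 / 3))) := by
  have affine (α β : ℝ) := tendsto_prod_one_add_affine_div_sq α β tendsto_boundaryScale hK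
  have lim := ((affine (1 / 6) 0).mul (affine (-(1 / 2)) (1 / 2))).div
    ((affine (1 / 2) (1 / 4)).mul (affine (1 / 2) (1 / 2))) (by positivity)
  rw [← exp_add, ← exp_add, ← exp_sub] at lim
  convert! lim.congr' ?_ using 3
  · ring
  · filter_upwards [eventually_gt_atTop 0] with n hn
    simp only [bulkFactor, bulkRatio_eq_affine hn, Pi.div_apply, Finset.prod_div_distrib,
      Finset.prod_mul_distrib]

theorem tendsto_sqrt_boundaryScale_mul_boundaryFactor
    (hK : Tendsto (fun n => K n / boundaryScale n) atTop (𝓝 x)) (hx : 0 < x) :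
    Tendsto (fun n => √(boundaryScale n) * boundaryFactor (K n)) atTop
      (𝓝 ((8 * √2 * √π)⁻¹ * x ^ (-(1 : ℝ) / 2))) := by
  have K_cast_atTop : Tendsto (fun n => (K n : ℝ)) atTop atTop := by
    refine (hK.pos_mul_atTop hx tendsto_boundaryScale).congr' ?_
    filter_upwards [eventually_gt_atTop 0] with n hn
    exact div_mul_cancel₀ _ (boundaryScale_pos hn).ne'
  have K_atTop : Tendsto K atTop atTop := tendsto_natCast_atTop_iff.1 K_cast_atTop
  rw [rpow_neg_one_div_two hx.le]
  refine ((tendsto_sqrt_mul_boundaryFactor.comp K_atTop).mul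
    (hK.sqrt.inv₀ (sqrt_pos.2 hx).ne')).congr' ?_
  filter_upwards [eventually_gt_atTop 0, K_atTop.eventually_gt_atTop 0] with n hn hKn
  have := boundaryScale_pos hn
  rw [Function.comp_apply, sqrt_div (Nat.cast_nonneg _)]
  field

theorem tendsto_sqrt_boundaryScale_mul_reducedWeight
    (hK : Tendsto (fun n => K n / boundaryScale n) atTop (𝓝 x)) (hx : 0 < x) :
    Tendsto (fun n => √(boundaryScale n) * reducedWeight n (K n)) atTop
      (𝓝 ((8 * √2 * √π)⁻¹ * limitDensity x)) := by
  simpa only [reducedWeight, limitDensity, mul_assoc] using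
    (tendsto_sqrt_boundaryScale_mul_boundaryFactor hK hx).mul (tendsto_bulkFactor hK)

theorem reducedWeight_nonneg {n k : ℕ} (hk : k ≤ n) : 0 ≤ reducedWeight n k :=
  mul_nonneg (boundaryFactor_nonneg k) (bulkFactor_nonneg hk)

theorem exists_sqrt_boundaryScale_mul_reducedWeight_le :
    ∃ M, 0 ≤ M ∧ ∀ n k : ℕ, 0 < k → k ≤ n →
      √(boundaryScale n) * reducedWeight n k ≤
        M * ((k / boundaryScale n) ^ (-(1 : ℝ) / 2) *
          exp (-(1 / 6) * (k / boundaryScale n) ^ 2)) := by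
  obtain ⟨M, hM0, hM⟩ := exists_sqrt_mul_boundaryFactor_le
  refine ⟨M * exp (4 / 3), by positivity, fun n k hk hkn => ?_⟩
  have hn := hk.trans_le hkn
  have ht := boundaryScale_pos hn
  have boundary_le :
      √(boundaryScale n) * boundaryFactor k ≤ M * (k / boundaryScale n) ^ (-(1 : ℝ) / 2) := by
    rw [rpow_neg_one_div_two (by positivity), sqrt_div (by positivity), inv_div, mul_div_assoc',
      le_div_iff₀ (by positivity)]
    linear_combination √(boundaryScale n) * hM k
  have bulk_le :
      bulkFactor n k ≤ exp (4 / 3) * exp (-(1 / 6) * (k / boundaryScale n) ^ 2) := by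
    convert bulkFactor_le_exp hn hkn using 3
    rw [div_pow, boundaryScale_sq]
    field
  calc √(boundaryScale n) * reducedWeight n k
      = √(boundaryScale n) * boundaryFactor k * bulkFactor n k := (mul_assoc _ _ _).symm
    _ ≤ M * (k / boundaryScale n) ^ (-(1 : ℝ) / 2) *
          (exp (4 / 3) * exp (-(1 / 6) * (k / boundaryScale n) ^ 2)) :=
        mul_le_mul boundary_le bulk_le (bulkFactor_nonneg hkn) (by positivity)
    _ = _ := by ring

end LocalLimit

section LimitLaw

theorem antitoneOn_rpow_mul_exp_neg_mul_sq {s b : ℝ} (hs : s ≤ 0) (hb : 0 ≤ b) :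
    AntitoneOn (fun x : ℝ => x ^ s * exp (-b * x ^ 2)) (Set.Ioi 0) := by
  intro x hx y _ hxy
  have hx : 0 < x := hx
  refine mul_le_mul (rpow_le_rpow_of_nonpos hx hxy hs) (exp_le_exp.2 ?_) (by positivity)
    (by positivity)
  simp only [neg_mul, neg_le_neg_iff]
  gcongr

theorem integral_limitDensity_pos : 0 < ∫ x in Set.Ioi 0, limitDensity x := by
  have integral_eq : ∫ x in Set.Ioi 0, limitDensity x =
      ∫ x in Set.Ioi (0 : ℝ), x ^ (-(1 : ℝ) / 2) * exp (-(2 / 3) * x ^ (2 : ℝ)) := by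
    refine integral_congr_ae (.of_forall fun x => ?_)
    simp only [limitDensity, rpow_two]
    ring_nf
  rw [integral_eq, integral_rpow_mul_exp_neg_mul_rpow two_pos (by norm_num) (by norm_num)]
  have := Gamma_pos_of_pos (show (0 : ℝ) < (-1 / 2 + 1) / 2 by norm_num)
  positivity

theorem evenAtTop_eq_map_two_mul : evenAtTop = map (fun n => 2 * n) atTop := by
  have comap_eq : comap (fun n : ℕ => 2 * n) atTop = atTop :=
    comap_embedding_atTop (by simp) fun c => ⟨c, by lia⟩
  rw [evenAtTop, ← range_two_mul, ← map_comap, comap_eq]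

theorem sum_filter_even_two_le {M : Type*} [AddCommMonoid M] (n : ℕ) (f : ℕ → M) :
    ∑ m ∈ (Finset.range (2 * n + 1)).filter (fun m => Even m ∧ 2 ≤ m), f m =
      ∑ k ∈ Finset.range n, f (2 * (k + 1)) := by
  have filter_eq : (Finset.range (2 * n + 1)).filter (fun m => Even m ∧ 2 ≤ m) =
      (Finset.range n).image fun k => 2 * (k + 1) := by
    ext m
    simp only [Finset.mem_filter, Finset.mem_range, Finset.mem_image]
    constructor
    · rintro ⟨hm, ⟨k, rfl⟩, hk⟩
      exact ⟨k - 1, by lia, by lia⟩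
    · rintro ⟨k, hk, rfl⟩
      exact ⟨by lia, even_two_mul _, by lia⟩
  rw [filter_eq, Finset.sum_image fun k _ k' _ h => by simpa using h]

variable {φ : ℝ → ℝ}

theorem tendsto_sum_mul_reducedWeight {C : ℝ} (hφC : ∀ x, |φ x| ≤ C)
    (hφ : ∀ᵐ x ∂volume.restrict (Set.Ioi 0), ContinuousAt φ x) :
    Tendsto (fun n : ℕ => (boundaryScale n)⁻¹ * ∑ k ∈ Finset.range n,
        φ ((k + 1 : ℕ) / boundaryScale n) * (√(boundaryScale n) * reducedWeight n (k + 1)))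
      atTop (𝓝 ((8 * √2 * √π)⁻¹ * ∫ x in Set.Ioi 0, φ x * limitDensity x)) := by
  obtain ⟨M, hM0, hM⟩ := exists_sqrt_boundaryScale_mul_reducedWeight_le
  have hC : 0 ≤ C := (abs_nonneg _).trans (hφC 0)
  have antitone := antitoneOn_rpow_mul_exp_neg_mul_sq (s := -(1 : ℝ) / 2) (b := 1 / 6)
    (by norm_num) (by norm_num)
  rw [← integral_const_mul]
  refine tendsto_inv_smul_sum_of_dominated_antitone
    (bound := fun x => C * (M * (x ^ (-(1 : ℝ) / 2) * exp (-(1 / 6) * x ^ 2))))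
    (f := fun n k => φ (k / boundaryScale n) * (√(boundaryScale n) * reducedWeight n k))
    tendsto_boundaryScale tendsto_natCast_div_boundaryScale
    (((integrableOn_rpow_mul_exp_neg_mul_sq (by norm_num) (by norm_num)).const_mul M).const_mul C)
    (fun x hx y hy hxy => by dsimp only; gcongr C * (M * ?_); exact antitone hx hy hxy)
    (.of_forall fun n k hk hkn => ?_) ?_
  · rw [norm_mul, norm_of_nonneg (mul_nonneg (sqrt_nonneg _) (reducedWeight_nonneg hkn))]
    exact mul_le_mul (hφC _) (hM n k hk hkn)
      (mul_nonneg (sqrt_nonneg _) (reducedWeight_nonneg hkn)) hC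
  · filter_upwards [ae_restrict_mem measurableSet_Ioi, hφ] with x hx hφx K hK
    rw [mul_left_comm]
    exact (hφx.tendsto.comp hK).mul (tendsto_sqrt_boundaryScale_mul_reducedWeight hK hx)

theorem sum_mul_PTilde_two_mul {n : ℕ} (hn : 0 < n) (φ : ℝ → ℝ) :
    ∑ m ∈ (Finset.range (2 * n + 1)).filter (fun m => Even m ∧ 2 ≤ m),
        φ (m / √(2 * n : ℕ)) * PTilde (2 * n) m =
      ((boundaryScale n)⁻¹ * ∑ k ∈ Finset.range n,
        φ ((k + 1 : ℕ) / boundaryScale n) * (√(boundaryScale n) * reducedWeight n (k + 1))) /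
      ((boundaryScale n)⁻¹ * ∑ k ∈ Finset.range n,
        √(boundaryScale n) * reducedWeight n (k + 1)) := by
  have ht := boundaryScale_pos hn
  have hD : 2 ^ (n + 2) * bulkCount n 0 ≠ 0 := by have := bulkCount_pos n 0; positivity
  have weight_eq : ∀ k ∈ Finset.range n, wTilde (2 * n) (2 * (k + 1)) =
      2 ^ (n + 2) * bulkCount n 0 * reducedWeight n (k + 1) := fun k hk =>
    wTilde_two_mul k.succ_pos (Finset.mem_range.1 hk)
  have arg_eq (k : ℕ) : ((2 * (k + 1) : ℕ) : ℝ) / √(2 * n : ℕ) = (k + 1 : ℕ) / boundaryScale n := by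
    rw [sqrt_two_mul_eq_boundaryScale, Nat.cast_mul, Nat.cast_two,
      mul_div_mul_left _ _ two_ne_zero]
  have numerator_eq : ∑ k ∈ Finset.range n,
        φ ((2 * (k + 1) : ℕ) / √(2 * n : ℕ)) * wTilde (2 * n) (2 * (k + 1)) =
      2 ^ (n + 2) * bulkCount n 0 * ∑ k ∈ Finset.range n,
        φ ((k + 1 : ℕ) / boundaryScale n) * reducedWeight n (k + 1) := by
    rw [Finset.mul_sum]
    refine Finset.sum_congr rfl fun k hk => ?_
    rw [arg_eq, weight_eq k hk, mul_left_comm]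
  simp only [PTilde, mul_div_assoc', ← Finset.sum_div, sum_filter_even_two_le]
  rw [numerator_eq, Finset.sum_congr rfl weight_eq, ← Finset.mul_sum, mul_div_mul_left _ _ hD]
  simp only [mul_left_comm (φ _), ← Finset.mul_sum]
  rw [mul_div_mul_left _ _ (inv_pos.2 ht).ne', mul_div_mul_left _ _ (sqrt_pos.2 ht).ne']

theorem tendsto_sum_mul_PTilde {C : ℝ} (hφC : ∀ x, |φ x| ≤ C)
    (hφ : ∀ᵐ x ∂volume.restrict (Set.Ioi 0), ContinuousAt φ x) :
    Tendsto (fun N : ℕ =>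
        ∑ m ∈ (Finset.range (N + 1)).filter (fun m => Even m ∧ 2 ≤ m), φ (m / √N) * PTilde N m)
      evenAtTop
      (𝓝 ((∫ x in Set.Ioi 0, φ x * limitDensity x) / ∫ x in Set.Ioi 0, limitDensity x)) := by
  have hc : (0 : ℝ) < (8 * √2 * √π)⁻¹ := by positivity
  have total : Tendsto (fun n : ℕ => (boundaryScale n)⁻¹ * ∑ k ∈ Finset.range n,
      √(boundaryScale n) * reducedWeight n (k + 1)) atTop
      (𝓝 ((8 * √2 * √π)⁻¹ * ∫ x in Set.Ioi 0, limitDensity x)) := by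
    simpa only [one_mul] using tendsto_sum_mul_reducedWeight (φ := fun _ => 1) (C := 1)
      (by simp) (.of_forall fun _ => continuousAt_const)
  have quotient := (tendsto_sum_mul_reducedWeight hφC hφ).div total
    (mul_pos hc integral_limitDensity_pos).ne'
  rw [mul_div_mul_left _ _ hc.ne'] at quotient
  rw [evenAtTop_eq_map_two_mul, tendsto_map'_iff]
  refine quotient.congr' ?_
  filter_upwards [eventually_gt_atTop 0] with n hn
  exact (sum_mul_PTilde_two_mul hn φ).symm

theorem setIntegral_Ioi_indicator_Icc_mul {a b : ℝ} (ha : 0 ≤ a) (hab : a ≤ b) (f : ℝ → ℝ) :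
    ∫ x in Set.Ioi 0, (Set.Icc a b).indicator 1 x * f x = ∫ x in a..b, f x := by
  have indicator_mul (x : ℝ) :
      (Set.Icc a b).indicator 1 x * f x = (Set.Icc a b).indicator f x := by
    rw [← Set.indicator_mul_left]
    simp
  have Ici_inter : Set.Ici 0 ∩ Set.Icc a b = Set.Icc a b :=
    Set.inter_eq_right.2 fun x hx => ha.trans hx.1
  simp only [indicator_mul]
  rw [← integral_Ici_eq_integral_Ioi, setIntegral_indicator measurableSet_Icc, Ici_inter,
    integral_Icc_eq_integral_Ioc, intervalIntegral.integral_of_le hab]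

theorem sum_filter_window_eq_sum_indicator_mul (a b : ℝ) {N : ℕ} (hN : 0 < N) (f : ℕ → ℝ) :
    ∑ m ∈ (Finset.range (N + 1)).filter
        (fun m : ℕ => Even m ∧ 2 ≤ m ∧ a * √N ≤ m ∧ m ≤ b * √N), f m =
      ∑ m ∈ (Finset.range (N + 1)).filter (fun m => Even m ∧ 2 ≤ m),
        (Set.Icc a b).indicator 1 (m / √N) * f m := by
  have hN' : 0 < √(N : ℝ) := sqrt_pos.2 (by exact_mod_cast hN)
  have filter_eq : (Finset.range (N + 1)).filter
        (fun m : ℕ => Even m ∧ 2 ≤ m ∧ a * √N ≤ m ∧ m ≤ b * √N) =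
      ((Finset.range (N + 1)).filter fun m => Even m ∧ 2 ≤ m).filter
        fun m : ℕ => (m / √N : ℝ) ∈ Set.Icc a b := by
    simp only [Finset.filter_filter, Set.mem_Icc, le_div_iff₀ hN', div_le_iff₀ hN', and_assoc]
  rw [filter_eq, Finset.sum_filter]
  refine Finset.sum_congr rfl fun m _ => ?_
  rw [Set.indicator_apply, Pi.one_apply, ite_mul, one_mul, zero_mul]

theorem ae_continuousAt_indicator_Icc (a b : ℝ) :
    ∀ᵐ x, ContinuousAt ((Set.Icc a b).indicator (1 : ℝ → ℝ)) x := by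
  filter_upwards [measure_eq_zero_iff_ae_notMem.1 ((convex_Icc a b).addHaar_frontier volume)]
    with x hx
  exact continuousOn_const.continuousAt_indicator hx

end LimitLaw

/-- Unrooted critical ensemble limit law: m(N)/√N converges in distribution to the law on
(0,∞) with density proportional to x^(-1/2) exp(-2x²/3). -/
theorem unrooted_critical_limit_law (a b : ℝ) (ha : 0 ≤ a) (hab : a < b) :
    Filter.Tendsto
      (fun N : ℕ =>
        ∑ m ∈ (Finset.range (N + 1)).filter
            (fun m : ℕ => Even m ∧ 2 ≤ m ∧
              a * Real.sqrt N ≤ (m : ℝ) ∧ (m : ℝ) ≤ b * Real.sqrt N),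
          PTilde N m)
      evenAtTop
      (nhds ((∫ x in a..b, x ^ (-(1 : ℝ) / 2) * Real.exp (-2 * x ^ 2 / 3)) /
        (∫ x in Set.Ioi (0 : ℝ), x ^ (-(1 : ℝ) / 2) * Real.exp (-2 * x ^ 2 / 3)))) := by
  have abs_indicator_le (x : ℝ) : |(Set.Icc a b).indicator (1 : ℝ → ℝ) x| ≤ 1 := by
    rw [← norm_eq_abs]
    exact (norm_indicator_le_norm_self _ _).trans (by simp)
  have weak_limit := tendsto_sum_mul_PTilde abs_indicator_le
    (ae_restrict_of_ae (ae_continuousAt_indicator_Icc a b))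
  rw [setIntegral_Ioi_indicator_Icc_mul ha hab.le] at weak_limit
  refine weak_limit.congr' ?_
  filter_upwards [(eventually_gt_atTop 0).filter_mono inf_le_left] with N hN
  exact (sum_filter_window_eq_sum_indicator_mul a b hN (PTilde N)).symm
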